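/- Let d ≤ 3 and let V ⊂ ℝ^d be a bounded open set that is star-shaped with respect to every point of a ball B ⊂ V. Let θ ≥ diam(V)/diam(B). Then there exists a constant C, depending only on d and θ, such that for every φ ∈ H²(V) ∩ C(V̄) there is an affine function L : ℝ^d → ℝ with sup_{x ∈ V̄} |φ(x) − L(x)| ≤ C · diam(V)² · |V|^{-1/2} · ‖φ‖_{H²(V)} and ‖∇L − ∇φ‖_{L²(V)^d} ≤ C · diam(V) · ‖φ‖_{H²(V)}. -/

import Mathlib

open Metric MeasureTheory

/-- The `H²(V)` norm of `φ` (square-integrable derivatives up to order 2). -/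
noncomputable def H2norm {d : ℕ} (V : Set (EuclideanSpace ℝ (Fin d)))
    (φ : EuclideanSpace ℝ (Fin d) → ℝ) : ℝ :=
  (∫ x in V, ((φ x) ^ 2 + ‖fderiv ℝ φ x‖ ^ 2 + ‖iteratedFDeriv ℝ 2 φ x‖ ^ 2)) ^ ((1 : ℝ) / 2)

lemma fo {E : Type*} [NormedAddCommGroup E] [NormedSpace ℝ E] (φ : E → ℝ) (hφ : ContDiff ℝ 2 φ)
   (x y : E) : ‖fderiv ℝ φ x - fderiv ℝ φ y‖ₑ ≤ ∫⁻ s in Set.Ioo (0:ℝ) 1, ‖x - y‖ₑ * ‖iteratedFDeriv ℝ 2 φ ((1-s)•y + s•x)‖ₑ := by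
  have h1 : ContDiff ℝ 1 (fderiv ℝ φ) := hφ.fderiv_right (by norm_num)
  have h2 : Continuous (fderiv ℝ (fderiv ℝ φ)) := h1.continuous_fderiv (by norm_num)
  have hN : ∀ u, ‖iteratedFDeriv ℝ 2 φ u‖ₑ = ‖fderiv ℝ (fderiv ℝ φ) u‖ₑ := by
    intro u
    rw [← ofReal_norm, ← ofReal_norm, ← norm_iteratedFDeriv_fderiv, norm_iteratedFDeriv_one]
  have hγ : ∀ s : ℝ, HasDerivAt (fun s : ℝ => (1-s)•y + s•x) (x - y) s := by
    intro s
    have := (((hasDerivAt_id s).const_sub 1).smul_const y).add ((hasDerivAt_id s).smul_const x)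
    convert! this using 1
    simp; abel
  have hd : ∀ s : ℝ, HasDerivAt (fun s : ℝ => fderiv ℝ φ ((1-s)•y + s•x)) (fderiv ℝ (fderiv ℝ φ) ((1-s)•y + s•x) (x-y)) s := by
    intro s
    exact ((h1.differentiable (by norm_num) _).hasFDerivAt).comp_hasDerivAt s (hγ s)
  have := intervalIntegral.integral_eq_sub_of_hasDerivAt (a := 0) (b := 1) (fun s _ => hd s) (by
    apply Continuous.intervalIntegrable; fun_prop)
  simp at this
  rw [← this, intervalIntegral.integral_of_le (by norm_num), integral_Ioc_eq_integral_Ioo]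
  refine (enorm_integral_le_lintegral_enorm _).trans ?_
  refine lintegral_mono fun s => ?_
  simp only [hN]
  have h3 := (fderiv ℝ (fderiv ℝ φ) ((1-s)•y + s•x)).le_opNorm (x - y)
  rw [map_sub] at h3
  rw [mul_comm, ← ofReal_norm, ← ofReal_norm, ← ofReal_norm, ← ENNReal.ofReal_mul (norm_nonneg _)]
  exact ENNReal.ofReal_le_ofReal h3

lemma so {E : Type*} [NormedAddCommGroup E] [NormedSpace ℝ E] (φ : E → ℝ) (hφ : ContDiff ℝ 2 φ)
   (x y : E) : ‖φ x - (φ y + fderiv ℝ φ y (x - y))‖ₑ ≤ ∫⁻ s in Set.Ioo (0:ℝ) 1, ‖x - y‖ₑ^2 * (ENNReal.ofReal (1-s) * ‖iteratedFDeriv ℝ 2 φ ((1-s)•y + s•x)‖ₑ) := by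
  have h1 : ContDiff ℝ 1 (fderiv ℝ φ) := hφ.fderiv_right (by norm_num)
  have h2 : Continuous (fderiv ℝ (fderiv ℝ φ)) := h1.continuous_fderiv (by norm_num)
  have hN : ∀ u, ‖iteratedFDeriv ℝ 2 φ u‖ₑ = ‖fderiv ℝ (fderiv ℝ φ) u‖ₑ := by
    intro u
    rw [← ofReal_norm, ← ofReal_norm, ← norm_iteratedFDeriv_fderiv, norm_iteratedFDeriv_one]
  have hγ : ∀ s : ℝ, HasDerivAt (fun s : ℝ => (1-s)•y + s•x) (x - y) s := by
    intro s
    have := (((hasDerivAt_id s).const_sub 1).smul_const y).add ((hasDerivAt_id s).smul_const x)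
    convert! this using 1
    simp; abel
  have hd : ∀ s : ℝ, HasDerivAt (fun s : ℝ => fderiv ℝ φ ((1-s)•y + s•x) (x-y)) (fderiv ℝ (fderiv ℝ φ) ((1-s)•y + s•x) (x-y) (x-y)) s := by
    intro s
    have := (((h1.differentiable (by norm_num) _).hasFDerivAt).comp_hasDerivAt s (hγ s)).clm_apply (hasDerivAt_const s (x-y))
    simpa using this
  have hd0 : ∀ s : ℝ, HasDerivAt (fun s : ℝ => φ ((1-s)•y + s•x)) (fderiv ℝ φ ((1-s)•y + s•x) (x-y)) s := by
    intro s
    exact ((hφ.differentiable (by norm_num) _).hasFDerivAt).comp_hasDerivAt s (hγ s)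
  have hd2 : ∀ s : ℝ, HasDerivAt (fun s : ℝ => φ ((1-s)•y + s•x) + (1-s) * fderiv ℝ φ ((1-s)•y + s•x) (x-y)) ((1-s) * fderiv ℝ (fderiv ℝ φ) ((1-s)•y + s•x) (x-y) (x-y)) s := by
    intro s
    have := (hd0 s).add (((hasDerivAt_id s).const_sub 1).mul (hd s))
    convert! this using 1
    simp only [id]; ring
  have := intervalIntegral.integral_eq_sub_of_hasDerivAt (a := 0) (b := 1) (fun s _ => hd2 s) (by
    apply Continuous.intervalIntegrable; fun_prop)
  simp only [sub_self, zero_smul, one_smul, zero_add, sub_zero, add_zero, zero_mul, one_mul] at this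
  rw [← this, intervalIntegral.integral_of_le (by norm_num), integral_Ioc_eq_integral_Ioo]
  refine (enorm_integral_le_lintegral_enorm _).trans ?_
  refine setLIntegral_mono' measurableSet_Ioo fun s hs => ?_
  simp only [hN]
  rw [enorm_mul, Real.enorm_of_nonneg (by linarith [hs.2]), mul_left_comm, sq]
  gcongr
  rw [mul_comm, ← mul_assoc]
  refine (ContinuousLinearMap.le_opENorm _ _).trans ?_
  gcongr
  exact ContinuousLinearMap.le_opENorm _ _

lemma sub1 {d : ℕ} (F : EuclideanSpace ℝ (Fin d) → ENNReal) (hF : Measurable F) (c : ℝ) (hc : 0 < c)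
    (w : EuclideanSpace ℝ (Fin d)) : ∫⁻ y, F (c • y + w) = ENNReal.ofReal ((c^d)⁻¹) * ∫⁻ y, F y := by
  have h := Measure.map_addHaar_smul (volume : Measure (EuclideanSpace ℝ (Fin d))) hc.ne'
  have := lintegral_map (μ := volume) (f := fun y => F (y + w)) (g := fun y => c • y) (by fun_prop) (by fun_prop)
  rw [h, lintegral_smul_measure, lintegral_add_right_eq_self] at this
  rw [← this]
  simp [abs_of_pos hc]

lemma jen {α : Type*} [MeasurableSpace α] (μ : Measure α) [IsProbabilityMeasure μ] (f : α → ENNReal)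
    (hf : AEMeasurable f μ) : (∫⁻ y, f y ∂μ)^2 ≤ ∫⁻ y, f y ^2 ∂μ := by
  have := ENNReal.lintegral_mul_le_Lp_mul_Lq μ (Real.HolderConjugate.two_two) hf (aemeasurable_const (b := 1))
  simp at this
  calc _ ≤ ((∫⁻ (a : α), f a ^ 2 ∂μ) ^ (2⁻¹:ℝ))^2 := by gcongr
    _ = _ := by rw [← ENNReal.rpow_natCast, ← ENNReal.rpow_mul]; norm_num

lemma pw : ∫⁻ s in Set.Ioo (0:ℝ) 1, ENNReal.ofReal ((1-s)^(-(1:ℝ)/2)) = 2 := by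
  have h0 : IntervalIntegrable (fun s : ℝ => s^(-(1:ℝ)/2)) volume 0 1 := intervalIntegral.intervalIntegrable_rpow' (by norm_num)
  have h1 := h0.comp_sub_left 1
  simp at h1
  rw [setLIntegral_congr Ioo_ae_eq_Ioc, ← ofReal_integral_eq_lintegral_ofReal, ← intervalIntegral.integral_of_le (by norm_num), intervalIntegral.integral_comp_sub_left (fun s : ℝ => s^(-(1:ℝ)/2)) 1, integral_rpow (by norm_num)]
  · norm_num
  · exact h1.symm.1
  · filter_upwards [ae_restrict_mem measurableSet_Ioc] with s hs
    exact Real.rpow_nonneg (by linarith [hs.2]) _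

lemma subA {d : ℕ} (F : EuclideanSpace ℝ (Fin d) → ENNReal) (hF : Measurable F) (c : ℝ) (hc : 0 < c)
    (w : EuclideanSpace ℝ (Fin d)) (A V : Set (EuclideanSpace ℝ (Fin d))) (hA : MeasurableSet A)
    (hV : MeasurableSet V) (h : ∀ y ∈ A, c • y + w ∈ V) :
    ∫⁻ y in A, F (c • y + w) ≤ ENNReal.ofReal ((c^d)⁻¹) * ∫⁻ y in V, F y := by
  rw [← lintegral_indicator hV, ← sub1 _ (hF.indicator hV) c hc w]
  calc _ = ∫⁻ y in A, V.indicator F (c • y + w) := by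
        refine setLIntegral_congr_fun hA fun y hy => ?_
        simp [Set.indicator_of_mem (h y hy)]
    _ ≤ _ := setLIntegral_le_lintegral _ _

open ProbabilityTheory in
lemma est1 {d : ℕ} (hd : d ≤ 3) (V : Set (EuclideanSpace ℝ (Fin d))) (z : EuclideanSpace ℝ (Fin d)) (r : ℝ)
    (hV : IsOpen V) (hb : Bornology.IsBounded V) (hr : 0 < r) (hB : ball z r ⊆ V)
    (hs : ∀ y ∈ ball z r, ∀ x ∈ V, segment ℝ y x ⊆ V)
    (φ : EuclideanSpace ℝ (Fin d) → ℝ) (hφ : ContDiff ℝ 2 φ) (x : EuclideanSpace ℝ (Fin d)) (hx : x ∈ V) :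
    ∫⁻ y, ‖φ x - (φ y + fderiv ℝ φ y (x - y))‖ₑ ∂(volume[|ball z r]) ≤
      2 * ENNReal.ofReal (diam V) ^ 2 * ((volume (ball z r))⁻¹ * ∫⁻ u in V, ‖iteratedFDeriv ℝ 2 φ u‖ₑ^2)^(1/2:ℝ) := by
  have hm0 : volume (ball z r) ≠ 0 := (measure_ball_pos _ _ hr).ne'
  have hmt : volume (ball z r) ≠ ⊤ := measure_ball_lt_top.ne
  have := cond_isProbabilityMeasure_of_finite hm0 hmt
  have hNc : Continuous (fun u => ‖iteratedFDeriv ℝ 2 φ u‖ₑ) := (hφ.continuous_iteratedFDeriv (m := 2) (by norm_num)).enorm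
  have hN : Measurable (fun u => ‖iteratedFDeriv ℝ 2 φ u‖ₑ) := hNc.measurable
  set N := fun u => ‖iteratedFDeriv ℝ 2 φ u‖ₑ with hNd
  set I := ∫⁻ u in V, N u ^ 2 with hI
  set m := volume (ball z r) with hm
  have hdist : ∀ y ∈ ball z r, ‖x - y‖ₑ ≤ ENNReal.ofReal (diam V) := by
    intro y hy
    rw [← ofReal_norm, ← dist_eq_norm]
    exact ENNReal.ofReal_le_ofReal (dist_le_diam_of_mem hb hx (hB hy))
  have hin : ∀ s ∈ Set.Ioo (0:ℝ) 1, ∫⁻ y, N ((1-s)•y + s•x) ∂(volume[|ball z r]) ≤ ENNReal.ofReal ((1-s)^(-(d:ℝ)/2)) * (m⁻¹ * I)^(1/2:ℝ) := by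
    intro s hs'
    have h1s : 0 < 1 - s := by linarith [hs'.2]
    have h1 := jen (volume[|ball z r]) (fun y => N ((1-s)•y + s•x)) (by fun_prop)
    have h2 := subA (fun u => N u ^ 2) (by fun_prop) (1-s) h1s (s • x) (ball z r) V measurableSet_ball hV.measurableSet
      (fun y hy => hs y hy x hx ⟨1-s, s, h1s.le, hs'.1.le, by ring, rfl⟩)
    have h3 : (∫⁻ y, N ((1-s)•y + s•x) ∂(volume[|ball z r]))^2 ≤ ENNReal.ofReal (((1-s)^d)⁻¹) * (m⁻¹ * I) := by
      refine h1.trans ?_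
      rw [ProbabilityTheory.cond, lintegral_smul_measure, smul_eq_mul, mul_left_comm]
      gcongr
    have h4 := ENNReal.rpow_le_rpow h3 (show (0:ℝ) ≤ 1/2 by norm_num)
    rw [← ENNReal.rpow_natCast, ← ENNReal.rpow_mul, ENNReal.mul_rpow_of_nonneg _ _ (by norm_num), ENNReal.ofReal_rpow_of_nonneg (by positivity) (by norm_num)] at h4
    norm_num at h4
    convert h4 using 3
    · rw [← Real.rpow_natCast, ← Real.rpow_neg h1s.le, ← Real.rpow_mul h1s.le]
      congr 1; ring
  calc _ ≤ ∫⁻ y, (∫⁻ s in Set.Ioo (0:ℝ) 1, ENNReal.ofReal (diam V)^2 * (ENNReal.ofReal (1-s) * N ((1-s)•y + s•x))) ∂(volume[|ball z r]) := by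
        refine lintegral_mono_ae ?_
        filter_upwards [ae_cond_mem measurableSet_ball] with y hy
        refine (so φ hφ x y).trans ?_
        gcongr
        exact hdist y hy
    _ = ∫⁻ s in Set.Ioo (0:ℝ) 1, ∫⁻ y, ENNReal.ofReal (diam V)^2 * (ENNReal.ofReal (1-s) * N ((1-s)•y + s•x)) ∂(volume[|ball z r]) := by
        apply lintegral_lintegral_swap
        apply Measurable.aemeasurable
        simp only [Function.uncurry_def]
        fun_prop
    _ ≤ ∫⁻ s in Set.Ioo (0:ℝ) 1, ENNReal.ofReal (diam V)^2 * (m⁻¹ * I)^(1/2:ℝ) * ENNReal.ofReal ((1-s)^(-(1:ℝ)/2)) := by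
        refine setLIntegral_mono' measurableSet_Ioo fun s hs' => ?_
        have h1s : 0 < 1 - s := by linarith [hs'.2]
        rw [lintegral_const_mul _ (by fun_prop), lintegral_const_mul _ (by fun_prop), mul_assoc]
        refine mul_le_mul_right ?_ _
        calc _ ≤ ENNReal.ofReal (1 - s) * (ENNReal.ofReal ((1-s)^(-(d:ℝ)/2)) * (m⁻¹ * I)^(1/2:ℝ)) := by
              gcongr; exact hin s hs'
          _ = ENNReal.ofReal ((1-s) * (1-s)^(-(d:ℝ)/2)) * (m⁻¹ * I)^(1/2:ℝ) := by
              rw [ENNReal.ofReal_mul h1s.le, mul_assoc]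
          _ ≤ _ := by
              rw [mul_comm]
              refine mul_le_mul_right (ENNReal.ofReal_le_ofReal ?_) _
              nth_rw 1 [← Real.rpow_one (1-s)]
              rw [← Real.rpow_add h1s]
              apply Real.rpow_le_rpow_of_exponent_ge h1s (by linarith [hs'.1])
              have : (d:ℝ) ≤ 3 := by exact_mod_cast hd
              linarith
    _ = _ := by
        rw [lintegral_const_mul _ (by fun_prop), pw]; ring

open ProbabilityTheory in
lemma est2 {d : ℕ} (V : Set (EuclideanSpace ℝ (Fin d))) (z : EuclideanSpace ℝ (Fin d)) (r : ℝ)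
    (hV : IsOpen V) (hb : Bornology.IsBounded V) (hr : 0 < r) (hB : ball z r ⊆ V)
    (hs : ∀ y ∈ ball z r, ∀ x ∈ V, segment ℝ y x ⊆ V)
    (φ : EuclideanSpace ℝ (Fin d) → ℝ) (hφ : ContDiff ℝ 2 φ) :
    ∫⁻ x in V, (∫⁻ y, ‖fderiv ℝ φ x - fderiv ℝ φ y‖ₑ ∂(volume[|ball z r]))^2 ≤
      ENNReal.ofReal (diam V) ^ 2 * (2 ^ d * ((volume (ball z r))⁻¹ * volume V + 1) * ∫⁻ u in V, ‖iteratedFDeriv ℝ 2 φ u‖ₑ^2) := by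
  have hm0 : volume (ball z r) ≠ 0 := (measure_ball_pos _ _ hr).ne'
  have hmt : volume (ball z r) ≠ ⊤ := measure_ball_lt_top.ne
  have := cond_isProbabilityMeasure_of_finite hm0 hmt
  have hIp : IsProbabilityMeasure (volume.restrict (Set.Ioo (0:ℝ) 1)) := ⟨by simp⟩
  have hNc : Continuous (fun u => ‖iteratedFDeriv ℝ 2 φ u‖ₑ) := (hφ.continuous_iteratedFDeriv (m := 2) (by norm_num)).enorm
  have hN : Measurable (fun u => ‖iteratedFDeriv ℝ 2 φ u‖ₑ) := hNc.measurable
  set N := fun u => ‖iteratedFDeriv ℝ 2 φ u‖ₑ with hNd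
  set I := ∫⁻ u in V, N u ^ 2 with hI
  set m := volume (ball z r) with hm
  have hdist : ∀ x ∈ V, ∀ y ∈ ball z r, ‖x - y‖ₑ ≤ ENNReal.ofReal (diam V) := by
    intro x hx y hy
    rw [← ofReal_norm, ← dist_eq_norm]
    exact ENNReal.ofReal_le_ofReal (dist_le_diam_of_mem hb hx (hB hy))
  have hhalf : ∀ c : ℝ, 1/2 ≤ c → ENNReal.ofReal ((c^d)⁻¹) ≤ 2^d := by
    intro c hc
    have : (2:ENNReal)^d = ENNReal.ofReal (2^d) := by
      rw [ENNReal.ofReal_pow (by norm_num)]; simp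
    rw [this]
    apply ENNReal.ofReal_le_ofReal
    rw [← inv_pow]
    have hc0 : 0 < c := by linarith
    gcongr
    rw [inv_le_comm₀ hc0 (by norm_num)]; linarith
  have hmeas : Measurable (fun p : (EuclideanSpace ℝ (Fin d) × EuclideanSpace ℝ (Fin d)) × ℝ => N ((1-p.2)•p.1.2 + p.2•p.1.1)) := by fun_prop
  have key : ∀ s ∈ Set.Ioo (0:ℝ) 1, ∫⁻ x in V, ∫⁻ y, N ((1-s)•y + s•x)^2 ∂(volume[|ball z r]) ≤ 2 ^ d * (m⁻¹ * volume V + 1) * I := by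
    intro s hs'
    have h1s : 0 < 1 - s := by linarith [hs'.2]
    rcases le_total s (1/2) with h | h
    · have : ∀ x ∈ V, ∫⁻ y, N ((1-s)•y + s•x)^2 ∂(volume[|ball z r]) ≤ m⁻¹ * (2^d * I) := by
        intro x hx
        have h2 := subA (fun u => N u ^ 2) (by fun_prop) (1-s) h1s (s • x) (ball z r) V measurableSet_ball hV.measurableSet
          (fun y hy => hs y hy x hx ⟨1-s, s, h1s.le, hs'.1.le, by ring, rfl⟩)
        rw [ProbabilityTheory.cond, lintegral_smul_measure, smul_eq_mul]
        gcongr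
        refine h2.trans ?_
        gcongr
        exact hhalf _ (by linarith)
      refine (setLIntegral_mono' hV.measurableSet this).trans ?_
      rw [setLIntegral_const]
      calc _ = 2 ^ d * (m⁻¹ * volume V) * I := by ring
        _ ≤ _ := by gcongr; exact le_self_add
    · rw [lintegral_lintegral_swap (by apply Measurable.aemeasurable; simp only [Function.uncurry_def]; fun_prop)]
      have : ∀ y ∈ ball z r, ∫⁻ x in V, N ((1-s)•y + s•x)^2 ≤ 2^d * I := by
        intro y hy
        have h2 := subA (fun u => N u ^ 2) (by fun_prop) s hs'.1 ((1-s) • y) V V hV.measurableSet hV.measurableSet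
          (fun x hx => hs y hy x hx ⟨1-s, s, h1s.le, hs'.1.le, by ring, add_comm _ _⟩)
        simp only [add_comm ((1-s) • y)]
        refine h2.trans ?_
        gcongr
        exact hhalf _ (by linarith)
      calc _ ≤ ∫⁻ y, 2^d * I ∂(volume[|ball z r]) := by
            refine lintegral_mono_ae ?_
            filter_upwards [ae_cond_mem measurableSet_ball] with y hy using this y hy
        _ = 2 ^ d * 1 * I := by simp
        _ ≤ _ := by gcongr; exact le_add_self
  calc _ ≤ ∫⁻ x in V, ENNReal.ofReal (diam V)^2 * ∫⁻ s in Set.Ioo (0:ℝ) 1, ∫⁻ y, N ((1-s)•y + s•x)^2 ∂(volume[|ball z r]) := by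
        refine setLIntegral_mono' hV.measurableSet fun x hx => ?_
        have h1 : ∫⁻ y, ‖fderiv ℝ φ x - fderiv ℝ φ y‖ₑ ∂(volume[|ball z r]) ≤ ENNReal.ofReal (diam V) * ∫⁻ s in Set.Ioo (0:ℝ) 1, ∫⁻ y, N ((1-s)•y + s•x) ∂(volume[|ball z r]) := by
          rw [lintegral_lintegral_swap (by apply Measurable.aemeasurable; simp only [Function.uncurry_def]; fun_prop)]
          rw [← lintegral_const_mul _ (by apply Measurable.lintegral_prod_right; simp only [Function.uncurry_def]; fun_prop)]
          refine lintegral_mono_ae ?_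
          filter_upwards [ae_cond_mem measurableSet_ball] with y hy
          rw [← lintegral_const_mul _ (by fun_prop)]
          refine (fo φ hφ x y).trans ?_
          gcongr
          exact hdist x hx y hy
        calc _ ≤ (ENNReal.ofReal (diam V) * ∫⁻ s in Set.Ioo (0:ℝ) 1, ∫⁻ y, N ((1-s)•y + s•x) ∂(volume[|ball z r]))^2 := by gcongr
          _ ≤ _ := by
            rw [mul_pow]
            gcongr
            refine (jen _ _ (by apply Measurable.aemeasurable; apply Measurable.lintegral_prod_right; simp only [Function.uncurry_def]; fun_prop)).trans ?_
            refine lintegral_mono fun s => jen _ _ (by fun_prop)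
    _ = ENNReal.ofReal (diam V)^2 * ∫⁻ s in Set.Ioo (0:ℝ) 1, ∫⁻ x in V, ∫⁻ y, N ((1-s)•y + s•x)^2 ∂(volume[|ball z r]) := by
        rw [lintegral_const_mul, lintegral_lintegral_swap]
        · apply Measurable.aemeasurable
          simp only [Function.uncurry_def]
          apply Measurable.lintegral_prod_right
          simp only [Function.uncurry_def]
          fun_prop
        · apply Measurable.lintegral_prod_right
          simp only [Function.uncurry_def]
          apply Measurable.lintegral_prod_right
          simp only [Function.uncurry_def]
          fun_prop
    _ ≤ ENNReal.ofReal (diam V)^2 * ∫⁻ s in Set.Ioo (0:ℝ) 1, 2 ^ d * (m⁻¹ * volume V + 1) * I := by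
        refine mul_le_mul_right ?_ _
        exact setLIntegral_mono' measurableSet_Ioo key
    _ = _ := by simp

lemma volb {d : ℕ} (θ : ℝ) (hθ : 0 < θ) (V : Set (EuclideanSpace ℝ (Fin d))) (z : EuclideanSpace ℝ (Fin d)) (r : ℝ)
    (hb : Bornology.IsBounded V) (hr : 0 < r) (hB : ball z r ⊆ V)
    (hD : diam V ≤ θ * diam (ball z r)) :
    (volume V).toReal ≤ (3 * θ)^d * (volume (ball z r)).toReal := by
  have h1 : V ⊆ ball z (3 * θ * r) := by
    intro x hx
    have h2 := dist_le_diam_of_mem hb hx (hB (mem_ball_self hr))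
    have h3 : diam (ball z r) ≤ 2 * r := diam_ball hr.le
    rw [mem_ball]
    have : 0 < θ * r := by positivity
    nlinarith
  have h2 := measure_mono (μ := volume) h1
  rw [Measure.addHaar_ball_mul_of_pos _ _ (by positivity), ← Measure.addHaar_ball_center volume z] at h2
  have h3 := ENNReal.toReal_mono (ENNReal.mul_ne_top ENNReal.ofReal_ne_top measure_ball_lt_top.ne) h2
  rw [ENNReal.toReal_mul, ENNReal.toReal_ofReal (by positivity)] at h3
  simpa using h3

lemma contInt {d : ℕ} (V : Set (EuclideanSpace ℝ (Fin d))) (hb : Bornology.IsBounded V)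
    {F : Type*} [NormedAddCommGroup F] 
    (f : EuclideanSpace ℝ (Fin d) → F) (hf : Continuous f) : IntegrableOn f V :=
  (hf.continuousOn.integrableOn_compact hb.isCompact_closure).mono_set subset_closure

open ProbabilityTheory in
theorem stmt4 (d : ℕ) (hd : d ≤ 3) (θ : ℝ) (hθ : 0 < θ) :
    ∃ C > 0, ∀ (V : Set (EuclideanSpace ℝ (Fin d))) (z : EuclideanSpace ℝ (Fin d)) (r : ℝ),
      IsOpen V → Bornology.IsBounded V → 0 < r → ball z r ⊆ V →
      (∀ y ∈ ball z r, ∀ x ∈ V, segment ℝ y x ⊆ V) →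
      diam V ≤ θ * diam (ball z r) →
      ∀ φ : EuclideanSpace ℝ (Fin d) → ℝ, ContDiff ℝ 2 φ →
      ∃ L : EuclideanSpace ℝ (Fin d) →ᵃ[ℝ] ℝ,
        (∀ x ∈ closure V,
          |φ x - L x| ≤ C * diam V ^ 2 * (volume V).toReal ^ (-(1 : ℝ) / 2) * H2norm V φ) ∧
        (∫ x in V, ‖gradient φ x -
            (InnerProductSpace.toDual ℝ _).symm (LinearMap.toContinuousLinearMap L.linear)‖ ^ 2)
            ^ ((1 : ℝ) / 2) ≤ C * diam V * H2norm V φ := by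
  have hK : 0 < (3 * θ) ^ d := by positivity
  refine ⟨2 + 2 * (3 * θ)^d + 2^d * ((3*θ)^d + 1), by positivity, ?_⟩
  intro V z r hV hb hr hB hs hD φ hφ
  have hvb := volb θ hθ V z r hb hr hB hD
  have hm0 : volume (ball z r) ≠ 0 := (measure_ball_pos _ _ hr).ne'
  have hmt : volume (ball z r) ≠ ⊤ := measure_ball_lt_top.ne
  have hprob := cond_isProbabilityMeasure_of_finite hm0 hmt
  have hvt : volume V ≠ ⊤ := hb.measure_lt_top.ne
  have hmpos : 0 < (volume (ball z r)).toReal := ENNReal.toReal_pos hm0 hmt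
  have hvpos : 0 < (volume V).toReal := 
    hmpos.trans_le (ENNReal.toReal_mono hvt (measure_mono hB))
  have hE1 := est1 hd V z r hV hb hr hB hs φ hφ
  have hE2 := est2 V z r hV hb hr hB hs φ hφ
  have c0 : Continuous φ := hφ.continuous
  have c1 : Continuous (fderiv ℝ φ) := hφ.continuous_fderiv (by norm_num)
  have c2 : Continuous (iteratedFDeriv ℝ 2 φ) := hφ.continuous_iteratedFDeriv (m := 2) (by norm_num)
  have hI : ∫⁻ u in V, ‖iteratedFDeriv ℝ 2 φ u‖ₑ^2 = ENNReal.ofReal (∫ u in V, ‖iteratedFDeriv ℝ 2 φ u‖^2) := by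
    rw [ofReal_integral_eq_lintegral_ofReal]
    · congr 1 with u
      rw [ENNReal.ofReal_pow (norm_nonneg _), ofReal_norm]
    · exact contInt V hb _ (by fun_prop)
    · exact Filter.Eventually.of_forall fun u => by positivity
  have hJ0 : 0 ≤ ∫ u in V, ‖iteratedFDeriv ℝ 2 φ u‖^2 := integral_nonneg fun u => by positivity
  have hJS : ∫ u in V, ‖iteratedFDeriv ℝ 2 φ u‖^2 ≤ ∫ x in V, ((φ x) ^ 2 + ‖fderiv ℝ φ x‖ ^ 2 + ‖iteratedFDeriv ℝ 2 φ x‖ ^ 2) := by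
    apply integral_mono (contInt V hb _ (by fun_prop)) (contInt V hb _ (by fun_prop))
    intro u
    have := sq_nonneg (φ u)
    have := sq_nonneg (‖fderiv ℝ φ u‖)
    simp only
    linarith
  have hH : H2norm V φ = √(∫ x in V, ((φ x) ^ 2 + ‖fderiv ℝ φ x‖ ^ 2 + ‖iteratedFDeriv ℝ 2 φ x‖ ^ 2)) := by
    rw [H2norm, Real.sqrt_eq_rpow]
  rw [hI] at hE2
  simp only [hI] at hE1
  rw [hH]
  set S := ∫ x in V, ((φ x) ^ 2 + ‖fderiv ℝ φ x‖ ^ 2 + ‖iteratedFDeriv ℝ 2 φ x‖ ^ 2) with hS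
  set J := ∫ u in V, ‖iteratedFDeriv ℝ 2 φ u‖^2 with hJ
  set m := volume (ball z r) with hm
  set K := (3 * θ) ^ d with hKd
  have hintν : ∀ {F : Type} [NormedAddCommGroup F] (f : EuclideanSpace ℝ (Fin d) → F), Continuous f → Integrable f (volume[|ball z r]) := by
    intro F _ f hf
    rw [ProbabilityTheory.cond]
    exact Integrable.smul_measure (contInt _ isBounded_ball f hf) (ENNReal.inv_ne_top.mpr hm0)
  set T : EuclideanSpace ℝ (Fin d) →L[ℝ] ℝ := ∫ y, fderiv ℝ φ y ∂(volume[|ball z r]) with hT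
  set a : ℝ := ∫ y, (φ y - fderiv ℝ φ y y) ∂(volume[|ball z r]) with ha
  let L : EuclideanSpace ℝ (Fin d) →ᵃ[ℝ] ℝ := T.toLinearMap.toAffineMap + AffineMap.const ℝ _ a
  have hLx : ∀ x, L x = T x + a := fun x => rfl
  have hLl : LinearMap.toContinuousLinearMap L.linear = T := by
    ext x
    simp [L]
  have hT' : ∀ x, T x = ∫ y, fderiv ℝ φ y x ∂(volume[|ball z r]) := by
    intro x
    rw [hT, ContinuousLinearMap.integral_apply (hintν _ c1)]
  have hdiff : ∀ x, φ x - L x = ∫ y, (φ x - (φ y + fderiv ℝ φ y (x - y))) ∂(volume[|ball z r]) := by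
    intro x
    rw [hLx, hT', ha, ← integral_add (hintν _ (by fun_prop)) (hintν _ (by fun_prop)), integral_sub (integrable_const _) (hintν _ (by fun_prop))]
    simp only [integral_const, probReal_univ, one_smul]
    congr 2 with y
    rw [map_sub]; ring
  have hdiff2 : ∀ x, fderiv ℝ φ x - T = ∫ y, (fderiv ℝ φ x - fderiv ℝ φ y) ∂(volume[|ball z r]) := by
    intro x
    rw [integral_sub (integrable_const _) (hintν _ c1)]
    simp [hT]
  have hdiam : 0 ≤ diam V := diam_nonneg
  have hS0 : 0 ≤ S := hJ0.trans hJS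
  refine ⟨L, ?_, ?_⟩
  · have hLc : Continuous fun x => |φ x - L x| := by
      simp only [hLx]; fun_prop
    have hVx : ∀ x ∈ V, |φ x - L x| ≤ (2 + 2 * K + 2^d * (K + 1)) * diam V ^ 2 * (volume V).toReal ^ (-(1 : ℝ) / 2) * √S := by
      intro x hx
      have h1 : ‖φ x - L x‖ₑ ≤ 2 * ENNReal.ofReal (diam V) ^ 2 * (m⁻¹ * ENNReal.ofReal J)^(1/2:ℝ) := by
        rw [hdiff]
        exact (enorm_integral_le_lintegral_enorm _).trans (hE1 x hx)
      have hne : (m⁻¹ * ENNReal.ofReal J)^(1/2:ℝ) ≠ ⊤ := 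
        ENNReal.rpow_ne_top_of_nonneg (by norm_num) (ENNReal.mul_ne_top (ENNReal.inv_ne_top.mpr hm0) ENNReal.ofReal_ne_top)
      have h2 := ENNReal.toReal_mono (ENNReal.mul_ne_top (ENNReal.mul_ne_top (by norm_num) (by simp)) hne) h1
      rw [toReal_enorm, Real.norm_eq_abs, ENNReal.toReal_mul, ENNReal.toReal_mul, ENNReal.toReal_pow, ENNReal.toReal_ofReal hdiam, ← ENNReal.toReal_rpow, ENNReal.toReal_mul, ENNReal.toReal_inv, ENNReal.toReal_ofReal hJ0, ← Real.sqrt_eq_rpow] at h2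
      have h3 : (volume V).toReal ^ (-(1 : ℝ) / 2) = √((volume V).toReal⁻¹) := by
        rw [Real.sqrt_eq_rpow, ← Real.rpow_neg_one, ← Real.rpow_mul hvpos.le]
        norm_num
      have h4 : √(m.toReal⁻¹ * J) ≤ √K * √((volume V).toReal⁻¹) * √S := by
        rw [← Real.sqrt_mul hK.le, ← Real.sqrt_mul (by positivity)]
        apply Real.sqrt_le_sqrt
        gcongr
        rw [← div_eq_mul_inv, inv_le_iff_one_le_mul₀ hmpos, div_mul_eq_mul_div, one_le_div hvpos]
        exact hvb
      have h5 : 2 * √K ≤ 2 + 2 * K + 2^d * (K + 1) := by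
        have : 0 < (2:ℝ)^d * (K + 1) := by positivity
        nlinarith [Real.sq_sqrt hK.le, sq_nonneg (√K - 1)]
      rw [h3]
      calc _ ≤ _ := h2
        _ ≤ 2 * diam V ^ 2 * (√K * √((volume V).toReal⁻¹) * √S) := by
          simp only [ENNReal.toReal_ofNat]
          gcongr
        _ = (2 * √K) * diam V ^ 2 * √((volume V).toReal⁻¹) * √S := by ring
        _ ≤ _ := by gcongr
    intro x hx
    exact closure_minimal (t := {x | |φ x - L x| ≤ (2 + 2 * K + 2^d * (K + 1)) * diam V ^ 2 * (volume V).toReal ^ (-(1 : ℝ) / 2) * √S}) hVx (isClosed_le hLc continuous_const) hx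
  · rw [hLl]
    have hn : ∀ x, ‖gradient φ x - (InnerProductSpace.toDual ℝ _).symm T‖ = ‖fderiv ℝ φ x - T‖ := by
      intro x
      rw [gradient, ← map_sub, LinearIsometryEquiv.norm_map]
    simp only [hn]
    rw [← Real.sqrt_eq_rpow]
    have h1 : ∫⁻ x in V, ENNReal.ofReal (‖fderiv ℝ φ x - T‖^2) ≤ ENNReal.ofReal (diam V) ^ 2 * (2 ^ d * (m⁻¹ * volume V + 1) * ENNReal.ofReal J) := by
      refine le_trans (lintegral_mono fun x => ?_) hE2
      rw [ENNReal.ofReal_pow (norm_nonneg _), ofReal_norm, hdiff2]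
      gcongr
      exact enorm_integral_le_lintegral_enorm _
    have hne : m⁻¹ * volume V ≠ ⊤ := ENNReal.mul_ne_top (ENNReal.inv_ne_top.mpr hm0) hvt
    have h2 := ENNReal.toReal_mono (by
      refine ENNReal.mul_ne_top (by simp) (ENNReal.mul_ne_top (ENNReal.mul_ne_top (by simp) ?_) (by simp))
      exact ENNReal.add_ne_top.mpr ⟨hne, by simp⟩) h1
    rw [← integral_eq_lintegral_of_nonneg_ae (Filter.Eventually.of_forall fun u => by positivity) (contInt V hb _ (by fun_prop)).1] at h2
    rw [ENNReal.toReal_mul, ENNReal.toReal_mul, ENNReal.toReal_mul, ENNReal.toReal_pow, ENNReal.toReal_ofReal hdiam, ENNReal.toReal_pow, ENNReal.toReal_add hne (by simp), ENNReal.toReal_mul, ENNReal.toReal_inv, ENNReal.toReal_ofReal hJ0] at h2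
    simp only [ENNReal.toReal_ofNat, ENNReal.toReal_one] at h2
    have h3 : m.toReal⁻¹ * (volume V).toReal ≤ K := by
      rw [inv_mul_le_iff₀ hmpos, mul_comm]; exact hvb
    set C := 2 + 2 * K + 2^d * (K + 1) with hC
    have hA : 0 < (2:ℝ)^d * (K + 1) := by positivity
    have h4 : 2^d * (K+1) ≤ C^2 := by nlinarith
    have hC0 : 0 ≤ C := by linarith
    refine Real.sqrt_le_iff.mpr ⟨by positivity, ?_⟩
    rw [mul_pow, mul_pow, Real.sq_sqrt hS0]
    calc _ ≤ _ := h2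
      _ ≤ diam V ^ 2 * (2 ^ d * (K + 1) * S) := by gcongr
      _ ≤ diam V ^ 2 * (C^2 * S) := by gcongr
      _ = _ := by ring
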